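/- Let p be an odd prime. For every integer k ≥ 0 there exists an assignment of integers a : (ℤ/pℤ)² → ℤ such that p^(p+3+k) exactly divides the group determinant D_G((a_g)) of G = (ℤ/pℤ)² (i.e., p^(p+3+k) divides it but p^(p+4+k) does not). -/

import Mathlib

/-- The group determinant of a finite additive group `G` with integer
coefficients `a`: the determinant of the matrix whose `(g,h)` entry is
`a (g - h)`. -/
def addGroupDet {G : Type*} [AddGroup G] [Fintype G] [DecidableEq G] (a : G → ℤ) : ℤ :=
  Matrix.det (Matrix.of fun g h : G => a (g - h))

/-!
The group determinant is the product of the values of `∑ a_g g ∈ ℤ[G]` at the characters of `G`.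
Let `x`, `y` be the standard generators of `G = (ℤ/pℤ)²` and let `ζ` be a primitive `p`-th root of
unity. At the character `x ↦ ζ ^ i`, `y ↦ ζ ^ j`, the element
`1 + (1 - y) ^ 2 + p ^ k (1 + y + ⋯ + y ^ (p - 1)) - x` takes the value `1 + u j - ζ ^ i`, where
`u 0 = p ^ (k + 1)` and `u j = (1 - ζ ^ j) ^ 2` for `j ≠ 0`. The product over `i` is
`(1 + u j) ^ p - 1`, which has the valuation of `p * u j` by lifting the exponent. Since
`∏_{j ≠ 0} (1 - ζ ^ j) = p`, the determinant has the valuation of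
`p ^ p * p ^ (k + 1) * p ^ 2 = p ^ (p + 3 + k)`.
-/

section Multiplicity

variable {p : ℕ}

lemma emultiplicity_one_add_prime_pow_pow_sub_one (hp : p.Prime) (hodd : Odd p) (k : ℕ) :
    emultiplicity (p : ℤ) ((1 + (p : ℤ) ^ (k + 1)) ^ p - 1) = k + 2 := by
  have hpℤ : Prime (p : ℤ) := Nat.prime_iff_prime_int.1 hp
  have hdvd : (p : ℤ) ∣ p ^ (k + 1) := dvd_pow_self _ k.succ_ne_zero
  have hnot : ¬ (p : ℤ) ∣ 1 + p ^ (k + 1) := fun h =>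
    hpℤ.not_dvd_one ((dvd_add_left hdvd).1 h)
  have hlte := Int.emultiplicity_pow_sub_pow hp hodd (y := 1) (by simp) hnot p
  rw [one_pow, add_sub_cancel_left, emultiplicity_pow_self_of_prime hpℤ,
    (Nat.finiteMultiplicity_iff.2 ⟨hp.ne_one, hp.pos⟩).emultiplicity_self] at hlte
  rw [hlte]
  norm_num [add_assoc]

lemma exists_one_add_pow_prime_eq {R : Type*} [CommSemiring R] (hp : p.Prime) (u : R) :
    ∃ r, (1 + u) ^ p = 1 + p * u + p * u ^ 2 * r + u ^ p := by
  have hsum : u * u ∣ ∑ k ∈ Finset.Ioo 1 p, u ^ k * 1 ^ (p - k) * ((p.choose k / p : ℕ) : R) :=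
    Finset.dvd_sum fun k hk => by
      rw [← sq, mul_assoc]
      exact (pow_dvd_pow u (Finset.mem_Ioo.1 hk).1).mul_right _
  obtain ⟨r, hr⟩ := hsum
  have hIoo : Finset.Ioo 0 p = insert 1 (Finset.Ioo 1 p) :=
    (Finset.Ioo_insert_left hp.one_lt).symm
  refine ⟨r, ?_⟩
  rw [add_comm 1 u, add_pow_prime_eq' hp, hIoo, Finset.sum_insert Finset.left_notMem_Ioo, hr,
    Nat.choose_one_right, Nat.div_self hp.pos]
  simp only [one_pow, pow_one, mul_one, Nat.cast_one]
  ring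

variable {R : Type*} [CommRing R] [IsDomain R] {π : R}

lemma emultiplicity_one_add_pow_prime_sub_one (hπ : Prime π) (hp : p.Prime) {u : R} (hu : π ∣ u)
    (hpu : π * p ∣ u ^ (p - 1)) :
    emultiplicity π ((1 + u) ^ p - 1) = emultiplicity π (p : R) + emultiplicity π u := by
  obtain ⟨r, hr⟩ := exists_one_add_pow_prime_eq hp u
  obtain ⟨v, hv⟩ := hu
  obtain ⟨z, hz⟩ := hpu
  have hfactor : (1 + u) ^ p - 1 = p * u * (1 + π * (v * r + z)) := by
    rw [hr, ← mul_pow_sub_one hp.ne_zero u, hz]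
    linear_combination p * u * r * hv
  have hnot : ¬ π ∣ 1 + π * (v * r + z) := fun h =>
    hπ.not_dvd_one ((dvd_add_left (dvd_mul_right π _)).1 h)
  rw [hfactor, emultiplicity_mul hπ, emultiplicity_mul hπ, emultiplicity_eq_zero.2 hnot, add_zero]

lemma emultiplicity_intCast_of_prime_dvd (hπ : Prime π) (hp : p.Prime) (hπp : π ∣ (p : R))
    (n : ℤ) :
    emultiplicity π (n : R) = emultiplicity (p : ℤ) n * emultiplicity π (p : R) := by
  obtain rfl | hn := eq_or_ne n 0
  · simp [ENat.top_mul (emultiplicity_ne_zero.2 hπp)]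
  have hfin : FiniteMultiplicity (p : ℤ) n :=
    .of_prime_left (Nat.prime_iff_prime_int.1 hp) hn
  obtain ⟨m, hnm, hpm⟩ := hfin.exists_eq_pow_mul_and_not_dvd
  have hπm : ¬ π ∣ (m : R) := fun h => by
    have hcop : IsCoprime (p : ℤ) m := (Nat.prime_iff_prime_int.1 hp).coprime_iff_not_dvd.2 hpm
    have hcopR : IsCoprime (p : R) m := by simpa using hcop.map (Int.castRingHom R)
    exact hπ.not_isUnit (hcopR.isUnit_of_dvd' hπp h)
  have hnR : (n : R) = p ^ multiplicity (p : ℤ) n * m := mod_cast congrArg (Int.cast (R := R)) hnm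
  rw [hnR, emultiplicity_mul hπ, emultiplicity_pow hπ, emultiplicity_eq_zero.2 hπm, add_zero,
    hfin.emultiplicity_eq_multiplicity]

end Multiplicity

section Determinant

variable {G R : Type*} [AddCommGroup G] [Fintype G] [CommRing R]

lemma lift_addChar_apply (χ : AddChar G R) (x : AddMonoidAlgebra ℤ G) :
    AddMonoidAlgebra.lift ℤ R G χ.toMonoidHom x = ∑ g, x.coeff g * χ g := by
  rw [AddMonoidAlgebra.lift_apply', Finsupp.sum_fintype _ _ (by simp)]
  simp

variable [IsDomain R]

lemma det_addChar_ne_zero [DecidableEq G] {χ : G → AddChar G R} (hχ : Function.Injective χ) :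
    (Matrix.of fun g i => χ i g).det ≠ 0 := by
  intro hdet
  obtain ⟨c, hc, hc0⟩ := Matrix.exists_mulVec_eq_zero_iff.2 hdet
  have hli : LinearIndependent R fun i => ⇑(χ i).toMonoidHom :=
    (linearIndependent_monoidHom (Multiplicative G) R).comp (fun i => (χ i).toMonoidHom)
      (AddChar.toMonoidHomEquiv.injective.comp hχ)
  refine hc (funext (Fintype.linearIndependent_iff.1 hli c (funext fun g => ?_)))
  simpa [Matrix.mulVec, dotProduct, mul_comm] using congrFun hc0 g.toAdd

/-- Dedekind's factorization; `χ` enumerates the characters of `G`. -/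
lemma intCast_addGroupDet_eq_prod [DecidableEq G] {χ : G → AddChar G R}
    (hχ : Function.Injective χ) (a : G → ℤ) :
    (addGroupDet a : R) = ∏ i, ∑ g, a g * χ i g := by
  set A : Matrix G G R := Matrix.of fun g h => (a (g - h) : R)
  set V : Matrix G G R := Matrix.of fun g i => (χ i)⁻¹ g
  set Λ : G → R := fun i => ∑ g, a g * χ i g
  have hA : (addGroupDet a : R) = A.det := (Int.castRingHom R).map_det _
  have hV : V.det ≠ 0 := det_addChar_ne_zero (inv_injective.comp hχ)
  have heigen : A * V = V * Matrix.diagonal Λ := by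
    ext g i
    rw [Matrix.mul_diagonal, Matrix.mul_apply, Finset.mul_sum]
    refine Fintype.sum_equiv (Equiv.subLeft g) _ _ fun h => ?_
    have hχh : χ i (-h) = χ i (-g) * χ i (g - h) := by
      rw [← AddChar.map_add_eq_mul, neg_add_eq_sub, sub_sub_cancel_left]
    simp only [A, V, Matrix.of_apply, AddChar.inv_apply, Equiv.subLeft_apply, hχh]
    ring
  have hdet : V.det * A.det = V.det * ∏ i, Λ i := by
    rw [mul_comm, ← Matrix.det_mul, heigen, Matrix.det_mul, Matrix.det_diagonal]
  rw [hA, mul_left_cancel₀ hV hdet]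

end Determinant

section PrimitiveCharacter

lemma card_univ_erase_zero_zmod (n : ℕ) [NeZero n] :
    (Finset.univ.erase (0 : ZMod n)).card = n - 1 := by
  rw [Finset.card_erase_of_mem (Finset.mem_univ _), Finset.card_univ, ZMod.card]

variable {n : ℕ}

lemma addChar_isPrimitiveRoot_apply_one {M : Type*} [CommMonoid M] [NeZero n]
    {ψ : AddChar (ZMod n) M} (hψ : ψ.IsPrimitive) :
    IsPrimitiveRoot (ψ 1) n := by
  have hpow (l : ℕ) : ψ 1 ^ l = 1 ↔ n ∣ l := by
    rw [← AddChar.map_nsmul_eq_pow, hψ.zmod_char_eq_one_iff, nsmul_one,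
      ZMod.natCast_eq_zero_iff]
  exact ⟨(hpow n).2 dvd_rfl, fun l => (hpow l).1⟩

lemma addChar_injective_of_isPrimitive {M : Type*} [CommMonoid M] [NeZero n]
    {ψ : AddChar (ZMod n) M} (hψ : ψ.IsPrimitive) :
    Function.Injective ψ :=
  (injective_iff_map_eq_one ψ.toMonoidHom).2 fun a => (hψ.zmod_char_eq_one_iff n a.toAdd).1

variable {R : Type*} [CommRing R] {p : ℕ} [Fact p.Prime]

lemma one_sub_addChar_dvd (ψ : AddChar (ZMod p) R) {i : ZMod p} (hi : i ≠ 0) (j : ZMod p) :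
    1 - ψ i ∣ 1 - ψ j := by
  have hj : ψ j = ψ i ^ (j / i).val := by
    rw [← AddChar.map_nsmul_eq_pow, nsmul_eq_mul, ZMod.natCast_zmod_val, div_mul_cancel₀ j hi]
  simpa [hj] using sub_dvd_pow_sub_pow 1 (ψ i) (j / i).val

variable [IsDomain R]

open Polynomial in
lemma prod_X_sub_C_addChar [NeZero n] {ψ : AddChar (ZMod n) R} (hψ : ψ.IsPrimitive) :
    ∏ i, (X - C (ψ i)) = X ^ n - 1 := by
  classical
  have hζ := addChar_isPrimitiveRoot_apply_one hψ
  have himage : Finset.univ.image ψ = nthRootsFinset n (1 : R) := by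
    refine Finset.eq_of_subset_of_card_le (fun z hz => ?_) ?_
    · obtain ⟨i, -, rfl⟩ := Finset.mem_image.1 hz
      rw [mem_nthRootsFinset (NeZero.pos n), ← AddChar.map_nsmul_eq_pow]
      simp
    · rw [hζ.card_nthRootsFinset,
        Finset.card_image_of_injective _ (addChar_injective_of_isPrimitive hψ),
        Finset.card_univ, ZMod.card]
  rw [X_pow_sub_one_eq_prod (NeZero.pos n) hζ, ← himage,
    Finset.prod_image (addChar_injective_of_isPrimitive hψ).injOn]

lemma prod_sub_addChar [NeZero n] {ψ : AddChar (ZMod n) R} (hψ : ψ.IsPrimitive) (c : R) :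
    ∏ i, (c - ψ i) = c ^ n - 1 := by
  simpa [Polynomial.eval_prod] using congrArg (Polynomial.eval c) (prod_X_sub_C_addChar hψ)

open Polynomial in
lemma prod_erase_one_sub_addChar [NeZero n] {ψ : AddChar (ZMod n) R} (hψ : ψ.IsPrimitive) :
    ∏ j ∈ Finset.univ.erase 0, (1 - ψ j) = n := by
  have hpoly : ∏ j ∈ Finset.univ.erase 0, (X - C (ψ j)) = ∑ i ∈ Finset.range n, X ^ i := by
    refine mul_left_cancel₀ (X_sub_C_ne_zero (1 : R)) ?_
    rw [C_1, mul_geom_sum, ← prod_X_sub_C_addChar hψ,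
      ← Finset.mul_prod_erase _ _ (Finset.mem_univ (0 : ZMod n)), AddChar.map_zero_eq_one, C_1]
  simpa [eval_prod, eval_finsetSum] using congrArg (eval 1) hpoly

lemma prime_dvd_one_sub_addChar_pow {ψ : AddChar (ZMod p) R} (hψ : ψ.IsPrimitive) (j : ZMod p) :
    (p : R) ∣ (1 - ψ j) ^ (p - 1) := by
  rw [← prod_erase_one_sub_addChar hψ, ← card_univ_erase_zero_zmod p, ← Finset.prod_const]
  exact Finset.prod_dvd_prod_of_dvd _ _ fun i hi =>
    one_sub_addChar_dvd ψ (Finset.ne_of_mem_erase hi) j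

variable {π : R}

lemma emultiplicity_one_add_one_sub_addChar_sq (hπ : Prime π) (hπp : π ∣ (p : R))
    {ψ : AddChar (ZMod p) R} (hψ : ψ.IsPrimitive) (j : ZMod p) :
    emultiplicity π ((1 + (1 - ψ j) ^ 2) ^ p - 1) =
      emultiplicity π (p : R) + 2 * emultiplicity π (1 - ψ j) := by
  have hp : p.Prime := Fact.out
  have hdvd := prime_dvd_one_sub_addChar_pow hψ j
  have hπj : π ∣ 1 - ψ j := hπ.dvd_of_dvd_pow (hπp.trans hdvd)
  rw [emultiplicity_one_add_pow_prime_sub_one hπ hp (dvd_pow hπj two_ne_zero),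
    emultiplicity_pow hπ, Nat.cast_ofNat]
  rw [pow_right_comm, sq]
  exact mul_dvd_mul (hπp.trans hdvd) hdvd

lemma emultiplicity_prod_one_add_one_sub_addChar_sq (hπ : Prime π) (hπp : π ∣ (p : R))
    {ψ : AddChar (ZMod p) R} (hψ : ψ.IsPrimitive) :
    emultiplicity π (∏ j ∈ Finset.univ.erase 0, ((1 + (1 - ψ j) ^ 2) ^ p - 1)) =
      (p + 1) * emultiplicity π (p : R) := by
  have hp : p.Prime := Fact.out
  have hsum : ∑ j ∈ Finset.univ.erase 0, emultiplicity π (1 - ψ j) = emultiplicity π (p : R) := by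
    rw [← Finset.emultiplicity_prod hπ, prod_erase_one_sub_addChar hψ]
  have hcard : (Finset.univ.erase (0 : ZMod p)).card + 2 = p + 1 := by
    rw [card_univ_erase_zero_zmod]
    have hpos := hp.pos
    lia
  rw [Finset.emultiplicity_prod hπ]
  simp only [emultiplicity_one_add_one_sub_addChar_sq hπ hπp hψ]
  rw [Finset.sum_add_distrib, ← Finset.mul_sum, hsum, Finset.sum_const, nsmul_eq_mul, ← add_mul]
  exact_mod_cast congrArg (fun m : ℕ => (m : ℕ∞) * emultiplicity π (p : R)) hcard

end PrimitiveCharacter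

section DotProductCharacter

variable {ι S M : Type*} [Fintype ι] [CommRing S] [CommMonoid M]

/-- The additive character `v ↦ ψ (u ⬝ᵥ v)` of `ι → S`. For primitive `ψ` these enumerate the
characters of `(ℤ/pℤ)²`. -/
def dotProductChar (ψ : AddChar S M) (u : ι → S) : AddChar (ι → S) M :=
  ψ.compAddMonoidHom (dotProductBilin S S u).toAddMonoidHom

lemma dotProductChar_single [DecidableEq ι] (ψ : AddChar S M) (u : ι → S) (i : ι) (s : S) :
    dotProductChar ψ u (Pi.single i s) = ψ (u i * s) :=
  congrArg ψ (dotProduct_single u s i)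

lemma dotProductChar_injective {ψ : AddChar S M} (hψ : ψ.IsPrimitive) :
    Function.Injective (dotProductChar (ι := ι) ψ) := by
  classical
  intro u v huv
  refine funext fun i => AddChar.to_mulShift_inj_of_isPrimitive hψ (DFunLike.ext _ _ fun s => ?_)
  simpa only [dotProductChar_single, AddChar.mulShift_apply] using
    DFunLike.congr_fun huv (Pi.single i s)

end DotProductCharacter

section Witness

open AddMonoidAlgebra

/-- The element `1 + (1 - y) ^ 2 + p ^ k (1 + y + ⋯ + y ^ (p - 1)) - x` of the group ring
`ℤ[(ℤ/pℤ)²]`, where `x` and `y` are the standard generators of the group. Its coefficients are the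
integers whose group determinant has `p`-adic valuation `p + 3 + k`. -/
noncomputable def groupRingWitness (p k : ℕ) [NeZero p] : AddMonoidAlgebra ℤ (Fin 2 → ZMod p) :=
  1 + (1 - single (Pi.single 1 1) 1) ^ 2
    + (p : AddMonoidAlgebra ℤ (Fin 2 → ZMod p)) ^ k * ∑ t : ZMod p, single (Pi.single 1 t) 1
    - single (Pi.single 0 1) 1

variable {p : ℕ} [Fact p.Prime] {R : Type*} [CommRing R] [IsDomain R] {ψ : AddChar (ZMod p) R}

lemma lift_dotProductChar_groupRingWitness (hψ : ψ.IsPrimitive) (k : ℕ) (u : Fin 2 → ZMod p) :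
    lift ℤ R _ (dotProductChar ψ u).toMonoidHom (groupRingWitness p k) =
      (1 + if u 1 = 0 then (p : R) ^ (k + 1) else (1 - ψ (u 1)) ^ 2) - ψ (u 0) := by
  have hsum : ∑ t, ψ (u 1 * t) = if u 1 = 0 then (p : R) else 0 := by
    simpa [mul_comm] using AddChar.sum_mulShift (u 1) hψ
  simp only [groupRingWitness, map_sub, map_add, map_one, map_pow, map_mul, map_natCast, map_sum,
    lift_single, AddChar.toMonoidHom_apply, toAdd_ofAdd, dotProductChar_single, mul_one, one_smul,
    hsum]
  split_ifs with h
  · simp [h, pow_succ]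
  · simp

lemma intCast_addGroupDet_groupRingWitness (hψ : ψ.IsPrimitive) (k : ℕ) :
    (addGroupDet (groupRingWitness p k).coeff : R) =
      ((1 + (p : R) ^ (k + 1)) ^ p - 1) *
        ∏ j ∈ Finset.univ.erase 0, ((1 + (1 - ψ j) ^ 2) ^ p - 1) := by
  set c : ZMod p → R := fun j => 1 + if j = 0 then (p : R) ^ (k + 1) else (1 - ψ j) ^ 2 with hc
  calc (addGroupDet (groupRingWitness p k).coeff : R)
      = ∏ u : Fin 2 → ZMod p, (c (u 1) - ψ (u 0)) := by
        rw [intCast_addGroupDet_eq_prod (dotProductChar_injective hψ)]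
        simp only [← lift_addChar_apply, lift_dotProductChar_groupRingWitness hψ, c]
    _ = ∏ j, ∏ i, (c j - ψ i) := by
        rw [Finset.prod_comm, ← Fintype.prod_prod_type']
        exact Fintype.prod_equiv (finTwoArrowEquiv _) _ _ fun _ => rfl
    _ = (c 0 ^ p - 1) * ∏ j ∈ Finset.univ.erase 0, (c j ^ p - 1) := by
        simp only [prod_sub_addChar hψ]
        exact (Finset.mul_prod_erase _ (fun j => c j ^ p - 1) (Finset.mem_univ 0)).symm
    _ = _ := by
        congr 1
        · simp [hc]
        · refine Finset.prod_congr rfl fun j hj => ?_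
          simp [hc, Finset.ne_of_mem_erase hj]

theorem emultiplicity_addGroupDet_groupRingWitness (hodd : Odd p) (hψ : ψ.IsPrimitive) {π : R}
    (hπ : Prime π) (hπp : π ∣ (p : R)) (hfin : FiniteMultiplicity π (p : R)) (k : ℕ) :
    emultiplicity (p : ℤ) (addGroupDet (groupRingWitness p k).coeff) = (p + 3 + k : ℕ) := by
  have hp : p.Prime := Fact.out
  have hone : emultiplicity π ((1 + (p : R) ^ (k + 1)) ^ p - 1) =
      (k + 2) * emultiplicity π (p : R) := by
    have hcast := emultiplicity_intCast_of_prime_dvd hπ hp hπp ((1 + (p : ℤ) ^ (k + 1)) ^ p - 1)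
    rw [emultiplicity_one_add_prime_pow_pow_sub_one hp hodd] at hcast
    exact_mod_cast hcast
  have hcancel : StrictMono fun e : ℕ∞ => e * emultiplicity π (p : R) :=
    ENat.mul_left_strictMono (emultiplicity_ne_zero.2 hπp)
      (finiteMultiplicity_iff_emultiplicity_ne_top.1 hfin)
  refine hcancel.injective ?_
  calc emultiplicity (p : ℤ) (addGroupDet (groupRingWitness p k).coeff) * emultiplicity π (p : R)
      = emultiplicity π (addGroupDet (groupRingWitness p k).coeff : R) :=
        (emultiplicity_intCast_of_prime_dvd hπ hp hπp _).symm
    _ = (k + 2) * emultiplicity π (p : R) + (p + 1) * emultiplicity π (p : R) := by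
        rw [intCast_addGroupDet_groupRingWitness hψ, emultiplicity_mul hπ, hone,
          emultiplicity_prod_one_add_one_sub_addChar_sq hπ hπp hψ]
    _ = (p + 3 + k : ℕ) * emultiplicity π (p : R) := by
        push_cast
        ring

end Witness

/-- Let `p` be an odd prime.  For every `k ≥ 0` there is an assignment of
integers to the elements of `G = (ℤ/pℤ)²` whose group determinant is exactly
divisible by `p^(p+3+k)`. -/
theorem stmt1 (p : ℕ) [Fact p.Prime] (hodd : Odd p) (k : ℕ) :
    ∃ a : (Fin 2 → ZMod p) → ℤ,
      (p : ℤ) ^ (p + 3 + k) ∣ addGroupDet a ∧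
      ¬ (p : ℤ) ^ (p + 3 + k + 1) ∣ addGroupDet a := by
  have : NeZero (p : ℚ) := ⟨Nat.cast_ne_zero.2 (Fact.out : p.Prime).ne_zero⟩
  have : IsCyclotomicExtension {p} ℚ (CyclotomicField p ℚ) :=
    CyclotomicField.isCyclotomicExtension p ℚ
  have hζ := IsCyclotomicExtension.zeta_spec p ℚ (CyclotomicField p ℚ)
  have hψ := AddChar.zmodChar_primitive_of_primitive_root p hζ.toInteger_isPrimitiveRoot
  have hp0 : (p : NumberField.RingOfIntegers (CyclotomicField p ℚ)) ≠ 0 :=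
    Nat.cast_ne_zero.2 (Fact.out : p.Prime).ne_zero
  have hπ := hζ.zeta_sub_one_prime'
  exact ⟨(groupRingWitness p k).coeff, emultiplicity_eq_coe.1
    (emultiplicity_addGroupDet_groupRingWitness hodd hψ hπ hζ.toInteger_sub_one_dvd_prime'
      (.of_prime_left hπ hp0) k)⟩
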